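/- arXiv:2407.12288 — 2 statements merged into one kernel-verified Lean document; each statement's English description precedes it below -/
import Mathlib

section
/- Fix finite sets Θ, 𝒳, 𝒴 and T ≥ 1, with the model given by θ-independent input kernels q_t and label kernels k_t(· | ν, h_t) as in the misspecified-prior setting, true prior π on Θ, and a misspecified prior π̃ on Θ. Let θ̃ be any additional Θ-valued random variable on the same probability space whose marginal distribution equals π̃ and which is conditionally independent of the data D_T = (X_0, Y_1, …, X_{T−1}, Y_T) given θ. Let P*_t = k_t(· | θ, H_t) be the true predictive and P̃_t = P̂^{π̃}_t(·|H_t) the Bayes posterior predictive under prior π̃. Then, in [0,∞]: (1/T)·∑_{t=0}^{T−1} E[ D_KL( P*_t ‖ P̃_t ) ] ≤ I(θ ; θ̃)/T + (1/T)·∑_{t=0}^{T−1} E[ D_KL( P*_t ‖ k_t(· | θ̃, H_t) ) ], i.e., the misspecified learner's loss is bounded by an estimation-error term I(θ;θ̃)/T plus a misspecification-error term. -/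
/-!
Statement 4 (misspecified learner error bound): in the misspecified-prior setting with true
prior `π` and misspecified prior `π̃`, for any `Θ`-valued random variable `θ̃` with marginal
`π̃` that is conditionally independent of the data given `θ` (encoded by a kernel `lam` with
`∑_ν π(ν)·lam(τ|ν) = π̃(τ)`), the misspecified learner's loss is bounded by
`I(θ;θ̃)/T` plus the misspecification term `(1/T)∑_t E[D_KL(P*_t ‖ k_t(·|θ̃,H_t))]`.
-/

open scoped Classical ENNReal

noncomputable section

/-- Probability of the event `X = a` under the pmf `p` on a finite sample space. -/
def pr {Ω : Type*} [Fintype Ω] (p : Ω → ℝ) {A : Type*} (X : Ω → A) (a : A) : ℝ :=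
  ∑ ω, if X ω = a then p ω else 0

/-- Shannon entropy of a random variable (in nats). -/
def entropy {Ω : Type*} [Fintype Ω] (p : Ω → ℝ) {A : Type*} [Fintype A] (X : Ω → A) : ℝ :=
  ∑ a, Real.negMulLog (pr p X a)

/-- Mutual information `I(X;Y) = H(X) + H(Y) - H(X,Y)` (in nats). -/
def mutualInfo {Ω : Type*} [Fintype Ω] (p : Ω → ℝ) {A B : Type*} [Fintype A] [Fintype B]
    (X : Ω → A) (Y : Ω → B) : ℝ :=
  entropy p X + entropy p Y - entropy p (fun ω => (X ω, Y ω))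

/-- KL divergence between pmfs on a finite set, valued in `[0,∞]`. -/
def klDivF {A : Type*} [Fintype A] (p q : A → ℝ) : ℝ≥0∞ :=
  if ∀ a, q a = 0 → p a = 0 then ENNReal.ofReal (∑ a, p a * Real.log (p a / q a)) else ⊤

variable {Θ 𝒳 𝒴 : Type*} [Fintype Θ] [Fintype 𝒳] [Fintype 𝒴] {T : ℕ}

/-- The history `h_t = (x_{0:t}, y_{1:t})` read off from a full trajectory `(x, y)`. -/
def hist (t : Fin T) (x : Fin T → 𝒳) (y : Fin T → 𝒴) :
    (Fin ((t : ℕ) + 1) → 𝒳) × (Fin (t : ℕ) → 𝒴) :=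
  (fun i => x (Fin.castLE t.isLt i), fun i => y (Fin.castLE (le_of_lt t.isLt) i))

/-- The past data `(x_{0:t-1}, y_{1:t})` strictly before the input `x_t`. -/
def past (t : Fin T) (x : Fin T → 𝒳) (y : Fin T → 𝒴) :
    (Fin (t : ℕ) → 𝒳) × (Fin (t : ℕ) → 𝒴) :=
  (fun i => x (Fin.castLE (le_of_lt t.isLt) i), fun i => y (Fin.castLE (le_of_lt t.isLt) i))

/-- Likelihood of the labels `y_{1:t}` of the history `h_t` under parameter `ν`. -/
def partialLik (k : ∀ t : Fin T, Θ → ((Fin ((t : ℕ) + 1) → 𝒳) × (Fin (t : ℕ) → 𝒴)) → 𝒴 → ℝ)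
    (t : Fin T) (ν : Θ) (x : Fin T → 𝒳) (y : Fin T → 𝒴) : ℝ :=
  ∏ s : Fin T, if (s : ℕ) < (t : ℕ) then k s ν (hist s x y) (y s) else 1

/-- Bayes posterior of `θ` given the history `h_t`, under prior `ρ` and kernels `k`. -/
def post (k : ∀ t : Fin T, Θ → ((Fin ((t : ℕ) + 1) → 𝒳) × (Fin (t : ℕ) → 𝒴)) → 𝒴 → ℝ)
    (ρ : Θ → ℝ) (t : Fin T) (x : Fin T → 𝒳) (y : Fin T → 𝒴) (ν : Θ) : ℝ :=
  ρ ν * partialLik k t ν x y / ∑ ν', ρ ν' * partialLik k t ν' x y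

/-- Bayes posterior predictive `P̂^ρ_t(b | h_t) = ∑_ν ρ(ν|h_t) k_t(b|ν,h_t)`. -/
def predictive (k : ∀ t : Fin T, Θ → ((Fin ((t : ℕ) + 1) → 𝒳) × (Fin (t : ℕ) → 𝒴)) → 𝒴 → ℝ)
    (ρ : Θ → ℝ) (t : Fin T) (x : Fin T → 𝒳) (y : Fin T → 𝒴) (b : 𝒴) : ℝ :=
  ∑ ν, post k ρ t x y ν * k t ν (hist t x y) b

/-- Likelihood of a full trajectory `(x,y)` given parameter `ν`. -/
def lik (q : ∀ t : Fin T, ((Fin (t : ℕ) → 𝒳) × (Fin (t : ℕ) → 𝒴)) → 𝒳 → ℝ)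
    (k : ∀ t : Fin T, Θ → ((Fin ((t : ℕ) + 1) → 𝒳) × (Fin (t : ℕ) → 𝒴)) → 𝒴 → ℝ)
    (ν : Θ) (x : Fin T → 𝒳) (y : Fin T → 𝒴) : ℝ :=
  ∏ t : Fin T, q t (past t x y) (x t) * k t ν (hist t x y) (y t)

/-!
Everything follows from the two-stage chain rule for the divergence, which is exact in `[0, ∞]`.

* Applied along time, it makes the expected sum of the one-step divergences the divergence between
  two trajectory laws. By Bayes' rule the one-step probabilities of the posterior predictive
  multiply up to the evidence, so the learner's trajectory law is the mixture `∑ τ, πt τ • P τ` of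
  the model laws `P τ`.
* Compare the law under which `θ̃ ∼ lam ν` and the data `∼ P ν` are independent with the learner's
  joint law of parameter and data. Disintegrating over the data first, the divergence is at least
  that from `P ν` to the mixture; disintegrating over the parameter first, it is
  `KL(lam ν ‖ πt) + ∑ τ, lam ν τ * KL(P ν ‖ P τ)`. Averaging the first summand over `ν ∼ π` gives
  `I(θ; θ̃)`, and the second one gives the misspecification error.
-/

/-- A sub-probability mass function. Total mass below one is allowed because `predictive` vanishes
identically after a history of zero evidence, where `post` divides by zero. -/
structure IsSubPMF {A : Type*} [Fintype A] (p : A → ℝ) : Prop where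
  nonneg : ∀ a, 0 ≤ p a
  sum_le_one : ∑ a, p a ≤ 1

/-- The joint mass function of a pair whose first entry has law `p` and whose second entry has
conditional law `κ a` given that the first is `a`. -/
def jointMass {A B : Type*} (p : A → ℝ) (κ : A → B → ℝ) (z : A × B) : ℝ :=
  p z.1 * κ z.1 z.2

section JointMass

variable {A B : Type*} [Fintype A] [Fintype B] {p : A → ℝ} {κ : A → B → ℝ}

theorem isSubPMF_of_mem_stdSimplex (hp : p ∈ stdSimplex ℝ A) : IsSubPMF p :=
  ⟨hp.1, hp.2.le⟩

theorem sum_jointMass (p : A → ℝ) (κ : A → B → ℝ) :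
    ∑ z, jointMass p κ z = ∑ a, p a * ∑ b, κ a b := by
  simp only [jointMass, Fintype.sum_prod_type, Finset.mul_sum]

theorem jointMass_mem_stdSimplex (hp : p ∈ stdSimplex ℝ A) (hκ : ∀ a, κ a ∈ stdSimplex ℝ B) :
    jointMass p κ ∈ stdSimplex ℝ (A × B) := by
  refine ⟨fun z => mul_nonneg (hp.1 _) ((hκ _).1 _), ?_⟩
  simp only [sum_jointMass, (hκ _).2, mul_one, hp.2]

theorem IsSubPMF.jointMass (hp : IsSubPMF p) (hκ : ∀ a, IsSubPMF (κ a)) :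
    IsSubPMF (jointMass p κ) where
  nonneg _ := mul_nonneg (hp.nonneg _) ((hκ _).nonneg _)
  sum_le_one := calc
    ∑ w, _root_.jointMass p κ w = ∑ a, p a * ∑ b, κ a b := sum_jointMass p κ
    _ ≤ ∑ a, p a :=
      Finset.sum_le_sum fun a _ => mul_le_of_le_one_right (hp.nonneg a) (hκ a).sum_le_one
    _ ≤ 1 := hp.sum_le_one

theorem mixture_mem_stdSimplex (hp : p ∈ stdSimplex ℝ A) (hκ : ∀ a, κ a ∈ stdSimplex ℝ B) :
    (fun b => ∑ a, p a * κ a b) ∈ stdSimplex ℝ B := by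
  have hjoint := jointMass_mem_stdSimplex hp hκ
  exact ⟨fun b => Finset.sum_nonneg fun a _ => hjoint.1 (a, b),
    (Fintype.sum_prod_type_right _).symm.trans hjoint.2⟩

theorem sum_ofReal_eq_one (hp : p ∈ stdSimplex ℝ A) : ∑ a, ENNReal.ofReal (p a) = 1 := by
  rw [← ENNReal.ofReal_sum_of_nonneg fun a _ => hp.1 a, hp.2, ENNReal.ofReal_one]

theorem sum_ofReal_jointMass_mul (hp : ∀ a, 0 ≤ p a) (κ : A → B → ℝ) (F : A × B → ℝ≥0∞) :
    ∑ z, ENNReal.ofReal (jointMass p κ z) * F z =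
      ∑ a, ENNReal.ofReal (p a) * ∑ b, ENNReal.ofReal (κ a b) * F (a, b) := by
  simp only [jointMass, Fintype.sum_prod_type, ENNReal.ofReal_mul (hp _), Finset.mul_sum, mul_assoc]

theorem sum_ofReal_jointMass_mul_fst (hp : ∀ a, 0 ≤ p a) (hκ : ∀ a, κ a ∈ stdSimplex ℝ B)
    (F : A → ℝ≥0∞) :
    ∑ z, ENNReal.ofReal (jointMass p κ z) * F z.1 = ∑ a, ENNReal.ofReal (p a) * F a := by
  simp only [sum_ofReal_jointMass_mul hp κ (fun z => F z.1), ← Finset.sum_mul,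
    sum_ofReal_eq_one (hκ _), one_mul]

end JointMass

section KLDivergence

variable {A B : Type*} [Fintype A] [Fintype B] {p r : A → ℝ} {κ η : A → B → ℝ}

theorem klDivF_of_absolutelyContinuous (h : ∀ a, r a = 0 → p a = 0) :
    klDivF p r = ENNReal.ofReal (∑ a, p a * Real.log (p a / r a)) :=
  if_pos h

theorem klDivF_eq_top {a : A} (hr : r a = 0) (hp : p a ≠ 0) : klDivF p r = ⊤ :=
  if_neg fun h => hp (h a hr)

theorem klDivF_self (p : A → ℝ) : klDivF p p = 0 := by
  rw [klDivF_of_absolutelyContinuous fun _ => id]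
  simp

theorem klDivF_comp_equiv (e : B ≃ A) (p r : A → ℝ) : klDivF (p ∘ e) (r ∘ e) = klDivF p r := by
  simp only [klDivF, Function.comp_apply, e.forall_congr_left, Equiv.apply_symm_apply,
    e.sum_comp fun a => p a * Real.log (p a / r a)]

theorem sum_mul_log_div_nonneg (hp : p ∈ stdSimplex ℝ A) (hr : IsSubPMF r)
    (hac : ∀ a, r a = 0 → p a = 0) : 0 ≤ ∑ a, p a * Real.log (p a / r a) := by
  have sub_le (a : A) : p a - r a ≤ p a * Real.log (p a / r a) := by
    rcases (hp.1 a).eq_or_lt' with hpa | hpa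
    · simpa [hpa] using hr.nonneg a
    · have hra : 0 < r a := (hr.nonneg a).lt_of_ne' fun h => hpa.ne' (hac a h)
      calc p a - r a = p a * (1 - (p a / r a)⁻¹) := by field_simp
        _ ≤ p a * Real.log (p a / r a) := by
          gcongr
          exact Real.one_sub_inv_le_log_of_pos (by positivity)
  calc 0 ≤ ∑ a, (p a - r a) := by
        rw [Finset.sum_sub_distrib, hp.2]
        exact sub_nonneg.mpr hr.sum_le_one
    _ ≤ _ := Finset.sum_le_sum fun a _ => sub_le a

omit [Fintype A] in
theorem jointMass_absolutelyContinuous_iff (hκ : ∀ a, κ a ∈ stdSimplex ℝ B) :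
    (∀ z, jointMass r η z = 0 → jointMass p κ z = 0) ↔
      (∀ a, r a = 0 → p a = 0) ∧ ∀ a, p a ≠ 0 → ∀ b, η a b = 0 → κ a b = 0 := by
  simp only [jointMass, mul_eq_zero, Prod.forall]
  constructor
  · refine fun h => ⟨fun a ha => ?_, fun a hpa b hb => (h a b (.inr hb)).resolve_left hpa⟩
    obtain ⟨b, -, hb⟩ : ∃ b ∈ Finset.univ, κ a b ≠ 0 :=
      Finset.exists_ne_zero_of_sum_ne_zero (by simp [(hκ a).2])
    exact (h a b (.inl ha)).resolve_right hb
  · rintro ⟨hr, hη⟩ a b (h | h)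
    · exact .inl (hr a h)
    · exact or_iff_not_imp_left.mpr fun hpa => hη a hpa b h

theorem sum_jointMass_mul_log_div (hκ : ∀ a, κ a ∈ stdSimplex ℝ B) (hr : ∀ a, r a = 0 → p a = 0)
    (hη : ∀ a, p a ≠ 0 → ∀ b, η a b = 0 → κ a b = 0) :
    ∑ z, jointMass p κ z * Real.log (jointMass p κ z / jointMass r η z) =
      ∑ a, p a * Real.log (p a / r a) + ∑ a, p a * ∑ b, κ a b * Real.log (κ a b / η a b) := by
  have log_split (a : A) (b : B) : p a * κ a b * Real.log (p a * κ a b / (r a * η a b)) =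
      p a * Real.log (p a / r a) * κ a b + p a * (κ a b * Real.log (κ a b / η a b)) := by
    by_cases hpa : p a = 0
    · simp [hpa]
    by_cases hκab : κ a b = 0
    · simp [hκab]
    have hra : r a ≠ 0 := mt (hr a) hpa
    have hηab : η a b ≠ 0 := mt (hη a hpa b) hκab
    rw [mul_div_mul_comm, Real.log_mul (div_ne_zero hpa hra) (div_ne_zero hκab hηab)]
    ring
  simp only [jointMass, Fintype.sum_prod_type, log_split, Finset.sum_add_distrib, ← Finset.mul_sum,
    (hκ _).2, mul_one]

theorem klDivF_add_sum_klDivF_eq_top (hp : ∀ a, 0 ≤ p a)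
    (hac : ¬((∀ a, r a = 0 → p a = 0) ∧ ∀ a, p a ≠ 0 → ∀ b, η a b = 0 → κ a b = 0)) :
    klDivF p r + ∑ a, ENNReal.ofReal (p a) * klDivF (κ a) (η a) = ⊤ := by
  rw [not_and_or] at hac
  push Not at hac
  rcases hac with ⟨a, hra, hpa⟩ | ⟨a, hpa, b, hb, hκab⟩
  · rw [klDivF_eq_top hra hpa, top_add]
  · have hterm : ENNReal.ofReal (p a) * klDivF (κ a) (η a) = ⊤ := by
      rw [klDivF_eq_top hb hκab, ENNReal.mul_top]
      simpa using (hp a).lt_of_ne' hpa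
    rw [ENNReal.sum_eq_top.mpr ⟨a, Finset.mem_univ a, hterm⟩, add_top]

theorem klDivF_jointMass (hp : p ∈ stdSimplex ℝ A) (hκ : ∀ a, κ a ∈ stdSimplex ℝ B)
    (hr : IsSubPMF r) (hη : ∀ a, IsSubPMF (η a)) :
    klDivF (jointMass p κ) (jointMass r η) =
      klDivF p r + ∑ a, ENNReal.ofReal (p a) * klDivF (κ a) (η a) := by
  by_cases hac : (∀ a, r a = 0 → p a = 0) ∧ ∀ a, p a ≠ 0 → ∀ b, η a b = 0 → κ a b = 0
  · have term_nonneg (a : A) : 0 ≤ p a * ∑ b, κ a b * Real.log (κ a b / η a b) := by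
      rcases eq_or_ne (p a) 0 with hpa | hpa
      · simp [hpa]
      · exact mul_nonneg (hp.1 a) (sum_mul_log_div_nonneg (hκ a) (hη a) (hac.2 a hpa))
    have term_eq (a : A) : ENNReal.ofReal (p a) * klDivF (κ a) (η a) =
        ENNReal.ofReal (p a * ∑ b, κ a b * Real.log (κ a b / η a b)) := by
      rcases eq_or_ne (p a) 0 with hpa | hpa
      · simp [hpa]
      · rw [klDivF_of_absolutelyContinuous (hac.2 a hpa), ENNReal.ofReal_mul (hp.1 a)]
    simp only [term_eq]
    rw [klDivF_of_absolutelyContinuous ((jointMass_absolutelyContinuous_iff hκ).mpr hac),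
      klDivF_of_absolutelyContinuous hac.1, ← ENNReal.ofReal_sum_of_nonneg fun a _ => term_nonneg a,
      ← ENNReal.ofReal_add (sum_mul_log_div_nonneg hp hr hac.1)
        (Finset.sum_nonneg fun a _ => term_nonneg a),
      sum_jointMass_mul_log_div hκ hac.1 hac.2]
  · rw [klDivF, if_neg (mt (jointMass_absolutelyContinuous_iff hκ).mp hac),
      klDivF_add_sum_klDivF_eq_top hp.1 hac]

theorem klDivF_mixture_le {p : B → ℝ} {α β : A → ℝ} {R : A → B → ℝ} (hp : p ∈ stdSimplex ℝ B)
    (hα : α ∈ stdSimplex ℝ A) (hβ : IsSubPMF β) (hR : ∀ a, IsSubPMF (R a)) :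
    klDivF p (fun b => ∑ a, β a * R a b) ≤
      klDivF α β + ∑ a, ENNReal.ofReal (α a) * klDivF p (R a) := by
  set m : B → ℝ := fun b => ∑ a, β a * R a b
  have term_nonneg (b : B) (a : A) : 0 ≤ β a * R a b := mul_nonneg (hβ.nonneg a) ((hR a).nonneg b)
  have hm : IsSubPMF m := by
    refine ⟨fun b => Finset.sum_nonneg fun a _ => term_nonneg b a, ?_⟩
    have := (hβ.jointMass hR).sum_le_one
    rwa [Fintype.sum_prod_type_right] at this
  have hpost (b : B) : IsSubPMF fun a => β a * R a b / m b := by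
    refine ⟨fun a => div_nonneg (term_nonneg b a) (hm.nonneg b), ?_⟩
    rw [← Finset.sum_div]
    exact div_self_le_one _
  have bayes : jointMass m (fun b a => β a * R a b / m b) = jointMass β R ∘ Equiv.prodComm B A := by
    ext ⟨b, a⟩
    refine mul_div_cancel_of_imp' fun hb => ?_
    exact (Finset.sum_eq_zero_iff_of_nonneg fun a _ => term_nonneg b a).mp hb a (Finset.mem_univ a)
  have swap : jointMass p (fun _ => α) = jointMass α (fun _ => p) ∘ Equiv.prodComm B A :=
    funext fun z => mul_comm _ _
  calc klDivF p m
      ≤ klDivF p m + ∑ b, ENNReal.ofReal (p b) * klDivF α (fun a => β a * R a b / m b) :=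
        le_self_add
    _ = klDivF (jointMass p fun _ => α) (jointMass m fun b a => β a * R a b / m b) :=
        (klDivF_jointMass hp (fun _ => hα) hm hpost).symm
    _ = klDivF (jointMass α fun _ => p) (jointMass β R) := by
        rw [bayes, swap, klDivF_comp_equiv]
    _ = klDivF α β + ∑ a, ENNReal.ofReal (α a) * klDivF p (R a) :=
        klDivF_jointMass hα (fun _ => hp) hβ hR

end KLDivergence

section MutualInformation

variable {Ω A B : Type*} [Fintype Ω] {p : Ω → ℝ} {X : Ω → A} {Y : Ω → B}

theorem pr_nonneg (hp : ∀ ω, 0 ≤ p ω) (a : A) : 0 ≤ pr p X a :=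
  Finset.sum_nonneg fun ω _ => ite_nonneg (hp ω) le_rfl

theorem sum_pr_prod_right [Fintype B] (p : Ω → ℝ) (X : Ω → A) (Y : Ω → B) (a : A) :
    ∑ b, pr p (fun ω => (X ω, Y ω)) (a, b) = pr p X a := by
  simp only [pr, Prod.mk.injEq, ite_and]
  rw [Finset.sum_comm]
  simp

theorem sum_pr_prod_left [Fintype A] (p : Ω → ℝ) (X : Ω → A) (Y : Ω → B) (b : B) :
    ∑ a, pr p (fun ω => (X ω, Y ω)) (a, b) = pr p Y b := by
  simp only [pr, Prod.mk.injEq, ite_and]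
  rw [Finset.sum_comm]
  simp

theorem pr_eq_zero_of_imp (hp : ∀ ω, 0 ≤ p ω) {a : A} {b : B} (hYX : ∀ ω, Y ω = b → X ω = a)
    (ha : pr p X a = 0) : pr p Y b = 0 := by
  refine le_antisymm (ha ▸ Finset.sum_le_sum fun ω _ => ?_) (pr_nonneg hp b)
  split_ifs with hY hX hX
  · exact le_rfl
  · exact absurd (hYX ω hY) hX
  · exact hp ω
  · exact le_rfl

variable [Fintype A] [Fintype B]

theorem mutualInfo_eq_sum_mul_log_div (hp : ∀ ω, 0 ≤ p ω) :
    mutualInfo p X Y = ∑ z, pr p (fun ω => (X ω, Y ω)) z *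
      Real.log (pr p (fun ω => (X ω, Y ω)) z / jointMass (pr p X) (fun _ => pr p Y) z) := by
  have log_split (a : A) (b : B) : pr p (fun ω => (X ω, Y ω)) (a, b) *
      Real.log (pr p (fun ω => (X ω, Y ω)) (a, b) / (pr p X a * pr p Y b)) =
      -(pr p (fun ω => (X ω, Y ω)) (a, b) * Real.log (pr p X a)) -
      pr p (fun ω => (X ω, Y ω)) (a, b) * Real.log (pr p Y b) -
      Real.negMulLog (pr p (fun ω => (X ω, Y ω)) (a, b)) := by
    by_cases hab : pr p (fun ω => (X ω, Y ω)) (a, b) = 0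
    · simp [hab]
    have hX : pr p X a ≠ 0 :=
      mt (pr_eq_zero_of_imp hp fun ω h => congrArg Prod.fst h) hab
    have hY : pr p Y b ≠ 0 :=
      mt (pr_eq_zero_of_imp hp fun ω h => congrArg Prod.snd h) hab
    rw [Real.log_div hab (mul_ne_zero hX hY), Real.log_mul hX hY, Real.negMulLog]
    ring
  have hX : entropy p X =
      -∑ a, ∑ b, pr p (fun ω => (X ω, Y ω)) (a, b) * Real.log (pr p X a) := by
    simp only [← Finset.sum_mul, sum_pr_prod_right, entropy, Real.negMulLog, neg_mul,
      Finset.sum_neg_distrib]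
  have hY : entropy p Y =
      -∑ a, ∑ b, pr p (fun ω => (X ω, Y ω)) (a, b) * Real.log (pr p Y b) := by
    rw [Finset.sum_comm]
    simp only [← Finset.sum_mul, sum_pr_prod_left, entropy, Real.negMulLog, neg_mul,
      Finset.sum_neg_distrib]
  simp only [jointMass, Fintype.sum_prod_type, log_split, Finset.sum_sub_distrib,
    Finset.sum_neg_distrib]
  rw [mutualInfo, hX, hY, entropy, Fintype.sum_prod_type]
  ring

theorem ofReal_mutualInfo (hp : ∀ ω, 0 ≤ p ω) :
    ENNReal.ofReal (mutualInfo p X Y) =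
      klDivF (pr p fun ω => (X ω, Y ω)) (jointMass (pr p X) fun _ => pr p Y) := by
  rw [mutualInfo_eq_sum_mul_log_div hp, klDivF_of_absolutelyContinuous]
  rintro ⟨a, b⟩ h
  rcases mul_eq_zero.mp h with ha | hb
  · exact pr_eq_zero_of_imp hp (fun ω h => congrArg Prod.fst h) ha
  · exact pr_eq_zero_of_imp hp (fun ω h => congrArg Prod.snd h) hb

theorem ofReal_mutualInfo_of_pr_eq_jointMass (hp : ∀ ω, 0 ≤ p ω) {μ : A → ℝ} {κ : A → B → ℝ}
    (hμ : μ ∈ stdSimplex ℝ A) (hκ : ∀ a, κ a ∈ stdSimplex ℝ B)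
    (hjoint : (pr p fun ω => (X ω, Y ω)) = jointMass μ κ) :
    ENNReal.ofReal (mutualInfo p X Y) =
      ∑ a, ENNReal.ofReal (μ a) * klDivF (κ a) fun b => ∑ a', μ a' * κ a' b := by
  have hX : pr p X = μ := by
    ext a
    rw [← sum_pr_prod_right p X Y]
    simp only [hjoint, jointMass, ← Finset.mul_sum, (hκ a).2, mul_one]
  have hY : pr p Y = fun b => ∑ a, μ a * κ a b := by
    ext b
    rw [← sum_pr_prod_left p X Y]
    simp only [hjoint, jointMass]
  have hmix := isSubPMF_of_mem_stdSimplex (mixture_mem_stdSimplex hμ hκ)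
  rw [ofReal_mutualInfo hp, hjoint, hX, hY,
    klDivF_jointMass hμ hκ (isSubPMF_of_mem_stdSimplex hμ) fun _ => hmix, klDivF_self, zero_add]

theorem pr_pair_eq_jointMass {D E : Type*} [Fintype D] [Fintype E] {μ : A → ℝ} {κ : A → B → ℝ}
    {L : A → D → E → ℝ} (hL : ∀ a, ∑ d, ∑ e, L a d e = 1) :
    (pr (fun ω : A × B × D × E => μ ω.1 * κ ω.1 ω.2.1 * L ω.1 ω.2.2.1 ω.2.2.2)
      fun ω => (ω.1, ω.2.1)) = jointMass μ κ := by
  ext ⟨a, b⟩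
  simp only [pr, Fintype.sum_prod_type, Prod.mk.injEq, ite_and]
  simp only [Finset.sum_ite_irrel, Finset.sum_const_zero, Finset.sum_ite_eq', Finset.mem_univ,
    if_true, ← Finset.mul_sum, hL, mul_one, jointMass]

end MutualInformation

section Trajectories

/-- The law of the trajectory generated by input kernels `q` and label kernels `κ`. Unlike in
`lik`, the label kernels carry no parameter, so that Bayesian predictors qualify. -/
def trajLaw (q : ∀ t : Fin T, ((Fin (t : ℕ) → 𝒳) × (Fin (t : ℕ) → 𝒴)) → 𝒳 → ℝ)
    (κ : ∀ t : Fin T, ((Fin ((t : ℕ) + 1) → 𝒳) × (Fin (t : ℕ) → 𝒴)) → 𝒴 → ℝ)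
    (z : (Fin T → 𝒳) × (Fin T → 𝒴)) : ℝ :=
  ∏ t : Fin T, q t (past t z.1 z.2) (z.1 t) * κ t (hist t z.1 z.2) (z.2 t)

omit [Fintype Θ] [Fintype 𝒳] [Fintype 𝒴] in
theorem lik_eq_trajLaw
    (q : ∀ t : Fin T, ((Fin (t : ℕ) → 𝒳) × (Fin (t : ℕ) → 𝒴)) → 𝒳 → ℝ)
    (k : ∀ t : Fin T, Θ → ((Fin ((t : ℕ) + 1) → 𝒳) × (Fin (t : ℕ) → 𝒴)) → 𝒴 → ℝ) (ν : Θ)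
    (x : Fin T → 𝒳) (y : Fin T → 𝒴) : lik q k ν x y = trajLaw q (fun t => k t ν) (x, y) :=
  rfl

/-- Separates the last input-label pair of a trajectory from the earlier ones. -/
def trajSplitLast (T : ℕ) (𝒳 𝒴 : Type*) :
    (Fin (T + 1) → 𝒳) × (Fin (T + 1) → 𝒴) ≃ ((Fin T → 𝒳) × (Fin T → 𝒴)) × (𝒳 × 𝒴) where
  toFun z := ((Fin.init z.1, Fin.init z.2), (z.1 (Fin.last T), z.2 (Fin.last T)))
  invFun w := (Fin.snoc w.1.1 w.2.1, Fin.snoc w.1.2 w.2.2)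
  left_inv z := by simp
  right_inv w := by simp

/-- The conditional law of the last input-label pair given the earlier ones. -/
def lastStep
    (q : ∀ t : Fin (T + 1), ((Fin (t : ℕ) → 𝒳) × (Fin (t : ℕ) → 𝒴)) → 𝒳 → ℝ)
    (κ : ∀ t : Fin (T + 1), ((Fin ((t : ℕ) + 1) → 𝒳) × (Fin (t : ℕ) → 𝒴)) → 𝒴 → ℝ)
    (z : (Fin T → 𝒳) × (Fin T → 𝒴)) : 𝒳 × 𝒴 → ℝ :=
  jointMass (q (Fin.last T) z) fun a => κ (Fin.last T) (Fin.snoc z.1 a, z.2)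

omit [Fintype 𝒳] [Fintype 𝒴] in
theorem hist_last (x : Fin (T + 1) → 𝒳) (y : Fin (T + 1) → 𝒴) :
    hist (Fin.last T) x y = (Fin.snoc (Fin.init x) (x (Fin.last T)), Fin.init y) := by
  rw [Fin.snoc_init_self]
  rfl

omit [Fintype 𝒳] [Fintype 𝒴] in
theorem trajLaw_succ
    (q : ∀ t : Fin (T + 1), ((Fin (t : ℕ) → 𝒳) × (Fin (t : ℕ) → 𝒴)) → 𝒳 → ℝ)
    (κ : ∀ t : Fin (T + 1), ((Fin ((t : ℕ) + 1) → 𝒳) × (Fin (t : ℕ) → 𝒴)) → 𝒴 → ℝ) :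
    trajLaw q κ = jointMass (trajLaw (fun t => q t.castSucc) fun t => κ t.castSucc)
      (lastStep q κ) ∘ trajSplitLast T 𝒳 𝒴 := by
  ext ⟨x, y⟩
  rw [trajLaw, Fin.prod_univ_castSucc, hist_last]
  rfl

theorem lastStep_mem_stdSimplex
    {q : ∀ t : Fin (T + 1), ((Fin (t : ℕ) → 𝒳) × (Fin (t : ℕ) → 𝒴)) → 𝒳 → ℝ}
    {κ : ∀ t : Fin (T + 1), ((Fin ((t : ℕ) + 1) → 𝒳) × (Fin (t : ℕ) → 𝒴)) → 𝒴 → ℝ}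
    (hq : ∀ t h, q t h ∈ stdSimplex ℝ 𝒳) (hκ : ∀ t h, κ t h ∈ stdSimplex ℝ 𝒴)
    (z : (Fin T → 𝒳) × (Fin T → 𝒴)) : lastStep q κ z ∈ stdSimplex ℝ (𝒳 × 𝒴) :=
  jointMass_mem_stdSimplex (hq (Fin.last T) z) fun _ => hκ (Fin.last T) _

theorem IsSubPMF.lastStep
    {q : ∀ t : Fin (T + 1), ((Fin (t : ℕ) → 𝒳) × (Fin (t : ℕ) → 𝒴)) → 𝒳 → ℝ}
    {κ : ∀ t : Fin (T + 1), ((Fin ((t : ℕ) + 1) → 𝒳) × (Fin (t : ℕ) → 𝒴)) → 𝒴 → ℝ}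
    (hq : ∀ t h, IsSubPMF (q t h)) (hκ : ∀ t h, IsSubPMF (κ t h))
    (z : (Fin T → 𝒳) × (Fin T → 𝒴)) : IsSubPMF (lastStep q κ z) :=
  (hq (Fin.last T) z).jointMass fun _ => hκ (Fin.last T) _

theorem trajLaw_mem_stdSimplex
    {q : ∀ t : Fin T, ((Fin (t : ℕ) → 𝒳) × (Fin (t : ℕ) → 𝒴)) → 𝒳 → ℝ}
    {κ : ∀ t : Fin T, ((Fin ((t : ℕ) + 1) → 𝒳) × (Fin (t : ℕ) → 𝒴)) → 𝒴 → ℝ}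
    (hq : ∀ t h, q t h ∈ stdSimplex ℝ 𝒳) (hκ : ∀ t h, κ t h ∈ stdSimplex ℝ 𝒴) :
    trajLaw q κ ∈ stdSimplex ℝ ((Fin T → 𝒳) × (Fin T → 𝒴)) := by
  induction T with
  | zero => simp [stdSimplex, trajLaw]
  | succ T ih =>
    have hjoint := jointMass_mem_stdSimplex
      (ih (fun t => hq t.castSucc) fun t => hκ t.castSucc) (lastStep_mem_stdSimplex hq hκ)
    rw [trajLaw_succ]
    exact ⟨fun z => hjoint.1 _, ((trajSplitLast T 𝒳 𝒴).sum_comp _).trans hjoint.2⟩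

theorem IsSubPMF.trajLaw
    {q : ∀ t : Fin T, ((Fin (t : ℕ) → 𝒳) × (Fin (t : ℕ) → 𝒴)) → 𝒳 → ℝ}
    {κ : ∀ t : Fin T, ((Fin ((t : ℕ) + 1) → 𝒳) × (Fin (t : ℕ) → 𝒴)) → 𝒴 → ℝ}
    (hq : ∀ t h, IsSubPMF (q t h)) (hκ : ∀ t h, IsSubPMF (κ t h)) :
    IsSubPMF (trajLaw q κ) := by
  induction T with
  | zero => exact ⟨fun z => by simp [_root_.trajLaw], by simp [_root_.trajLaw]⟩
  | succ T ih =>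
    have hjoint := (ih (fun t => hq t.castSucc) fun t => hκ t.castSucc).jointMass
      (IsSubPMF.lastStep hq hκ)
    rw [trajLaw_succ]
    exact ⟨fun z => hjoint.nonneg _,
      ((trajSplitLast T 𝒳 𝒴).sum_comp _).trans_le hjoint.sum_le_one⟩

theorem klDivF_lastStep
    {q : ∀ t : Fin (T + 1), ((Fin (t : ℕ) → 𝒳) × (Fin (t : ℕ) → 𝒴)) → 𝒳 → ℝ}
    {κ κ' : ∀ t : Fin (T + 1), ((Fin ((t : ℕ) + 1) → 𝒳) × (Fin (t : ℕ) → 𝒴)) → 𝒴 → ℝ}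
    (hq : ∀ t h, q t h ∈ stdSimplex ℝ 𝒳) (hκ : ∀ t h, κ t h ∈ stdSimplex ℝ 𝒴)
    (hκ' : ∀ t h, IsSubPMF (κ' t h)) (z : (Fin T → 𝒳) × (Fin T → 𝒴)) :
    klDivF (lastStep q κ z) (lastStep q κ' z) =
      ∑ w, ENNReal.ofReal (lastStep q κ z w) * klDivF
        (κ (Fin.last T) (Fin.snoc z.1 w.1, z.2)) (κ' (Fin.last T) (Fin.snoc z.1 w.1, z.2)) := by
  have hqz := hq (Fin.last T) z
  rw [lastStep, lastStep, klDivF_jointMass hqz (fun _ => hκ (Fin.last T) _)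
    (isSubPMF_of_mem_stdSimplex hqz) fun _ => hκ' (Fin.last T) _, klDivF_self, zero_add]
  exact (sum_ofReal_jointMass_mul_fst hqz.1 (fun _ => hκ (Fin.last T) _) _).symm

theorem sum_ofReal_trajLaw_mul_init
    {q : ∀ t : Fin (T + 1), ((Fin (t : ℕ) → 𝒳) × (Fin (t : ℕ) → 𝒴)) → 𝒳 → ℝ}
    {κ : ∀ t : Fin (T + 1), ((Fin ((t : ℕ) + 1) → 𝒳) × (Fin (t : ℕ) → 𝒴)) → 𝒴 → ℝ}
    (hq : ∀ t h, q t h ∈ stdSimplex ℝ 𝒳) (hκ : ∀ t h, κ t h ∈ stdSimplex ℝ 𝒴)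
    (F : (Fin T → 𝒳) × (Fin T → 𝒴) → ℝ≥0∞) :
    ∑ z, ENNReal.ofReal (trajLaw q κ z) * F (Fin.init z.1, Fin.init z.2) =
      ∑ z, ENNReal.ofReal (trajLaw (fun t => q t.castSucc) (fun t => κ t.castSucc) z) * F z := by
  have hlaw := trajLaw_mem_stdSimplex (fun t => hq t.castSucc) fun t => hκ t.castSucc
  rw [← sum_ofReal_jointMass_mul_fst hlaw.1 (lastStep_mem_stdSimplex hq hκ),
    ← (trajSplitLast T 𝒳 𝒴).sum_comp, trajLaw_succ]
  rfl

theorem sum_ofReal_trajLaw_mul_klDivF_last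
    {q : ∀ t : Fin (T + 1), ((Fin (t : ℕ) → 𝒳) × (Fin (t : ℕ) → 𝒴)) → 𝒳 → ℝ}
    {κ κ' : ∀ t : Fin (T + 1), ((Fin ((t : ℕ) + 1) → 𝒳) × (Fin (t : ℕ) → 𝒴)) → 𝒴 → ℝ}
    (hq : ∀ t h, q t h ∈ stdSimplex ℝ 𝒳) (hκ : ∀ t h, κ t h ∈ stdSimplex ℝ 𝒴)
    (hκ' : ∀ t h, IsSubPMF (κ' t h)) :
    ∑ z, ENNReal.ofReal (trajLaw q κ z) * klDivF
        (κ (Fin.last T) (hist (Fin.last T) z.1 z.2)) (κ' (Fin.last T) (hist (Fin.last T) z.1 z.2)) =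
      ∑ z, ENNReal.ofReal (trajLaw (fun t => q t.castSucc) (fun t => κ t.castSucc) z) *
        klDivF (lastStep q κ z) (lastStep q κ' z) := by
  have hlaw := trajLaw_mem_stdSimplex (fun t => hq t.castSucc) fun t => hκ t.castSucc
  simp only [klDivF_lastStep hq hκ hκ']
  rw [← sum_ofReal_jointMass_mul hlaw.1 (lastStep q κ) fun w => klDivF
      (κ (Fin.last T) (Fin.snoc w.1.1 w.2.1, w.1.2))
      (κ' (Fin.last T) (Fin.snoc w.1.1 w.2.1, w.1.2)),
    ← (trajSplitLast T 𝒳 𝒴).sum_comp, trajLaw_succ]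
  simp only [hist_last]
  rfl

theorem klDivF_trajLaw
    {q : ∀ t : Fin T, ((Fin (t : ℕ) → 𝒳) × (Fin (t : ℕ) → 𝒴)) → 𝒳 → ℝ}
    {κ κ' : ∀ t : Fin T, ((Fin ((t : ℕ) + 1) → 𝒳) × (Fin (t : ℕ) → 𝒴)) → 𝒴 → ℝ}
    (hq : ∀ t h, q t h ∈ stdSimplex ℝ 𝒳) (hκ : ∀ t h, κ t h ∈ stdSimplex ℝ 𝒴)
    (hκ' : ∀ t h, IsSubPMF (κ' t h)) :
    klDivF (trajLaw q κ) (trajLaw q κ') = ∑ t, ∑ z, ENNReal.ofReal (trajLaw q κ z) *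
      klDivF (κ t (hist t z.1 z.2)) (κ' t (hist t z.1 z.2)) := by
  induction T with
  | zero =>
    have : trajLaw q κ = trajLaw q κ' := funext fun z => by simp [trajLaw]
    rw [this, klDivF_self]
    simp
  | succ T ih =>
    have hq' : ∀ t h, IsSubPMF (q t h) := fun t h => isSubPMF_of_mem_stdSimplex (hq t h)
    rw [trajLaw_succ q κ, trajLaw_succ q κ', klDivF_comp_equiv,
      klDivF_jointMass
        (trajLaw_mem_stdSimplex (fun t => hq t.castSucc) fun t => hκ t.castSucc)
        (lastStep_mem_stdSimplex hq hκ)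
        (IsSubPMF.trajLaw (fun t => hq' t.castSucc) fun t => hκ' t.castSucc)
        (IsSubPMF.lastStep hq' hκ'),
      ih (fun t => hq t.castSucc) (fun t => hκ t.castSucc) fun t => hκ' t.castSucc,
      ← sum_ofReal_trajLaw_mul_klDivF_last hq hκ hκ', ← trajLaw_succ, Fin.sum_univ_castSucc]
    congr 1
    refine Finset.sum_congr rfl fun t _ => ?_
    exact (sum_ofReal_trajLaw_mul_init hq hκ fun z =>
      klDivF (κ t.castSucc (hist t z.1 z.2)) (κ' t.castSucc (hist t z.1 z.2))).symm

end Trajectories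

section Predictive

omit [Fintype 𝒳] [Fintype 𝒴]

variable {k : ∀ t : Fin T, Θ → ((Fin ((t : ℕ) + 1) → 𝒳) × (Fin (t : ℕ) → 𝒴)) → 𝒴 → ℝ}
  {ρ : Θ → ℝ}

theorem hist_eq_of_le {s t : Fin T} (hst : s ≤ t) {x x' : Fin T → 𝒳} {y y' : Fin T → 𝒴}
    (h : hist t x y = hist t x' y') : hist s x y = hist s x' y' := by
  refine Prod.ext (funext fun i => ?_) (funext fun i => ?_)
  · exact congrFun (congrArg Prod.fst h) (Fin.castLE (Nat.succ_le_succ hst) i)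
  · exact congrFun (congrArg Prod.snd h) (Fin.castLE hst i)

theorem label_eq_of_hist_eq {s t : Fin T} (hst : s < t) {x x' : Fin T → 𝒳} {y y' : Fin T → 𝒴}
    (h : hist t x y = hist t x' y') : y s = y' s :=
  congrFun (congrArg Prod.snd h) ⟨s, hst⟩

omit [Fintype Θ] in
theorem partialLik_eq_of_hist_eq {t : Fin T} {x x' : Fin T → 𝒳} {y y' : Fin T → 𝒴}
    (h : hist t x y = hist t x' y') (ν : Θ) : partialLik k t ν x y = partialLik k t ν x' y' := by
  refine Finset.prod_congr rfl fun s _ => ?_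
  split_ifs with hst
  · rw [hist_eq_of_le (le_of_lt hst) h, label_eq_of_hist_eq hst h]
  · rfl

theorem predictive_factorsThrough_hist (t : Fin T) :
    Function.FactorsThrough (fun z : (Fin T → 𝒳) × (Fin T → 𝒴) => predictive k ρ t z.1 z.2)
      fun z => hist t z.1 z.2 := by
  intro z z' h
  funext b
  simp only [predictive, post, partialLik_eq_of_hist_eq h, h]

/-- The posterior predictive as a function of the history `h_t`, whereas `predictive` takes a full
trajectory. It is extended by zero, should `𝒴` be empty and `h_t` be part of no trajectory. -/
def predictiveKernel (k : ∀ t : Fin T, Θ → ((Fin ((t : ℕ) + 1) → 𝒳) × (Fin (t : ℕ) → 𝒴)) → 𝒴 → ℝ)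
    (ρ : Θ → ℝ) (t : Fin T) :
    ((Fin ((t : ℕ) + 1) → 𝒳) × (Fin (t : ℕ) → 𝒴)) → 𝒴 → ℝ :=
  Function.extend (fun z : (Fin T → 𝒳) × (Fin T → 𝒴) => hist t z.1 z.2)
    (fun z => predictive k ρ t z.1 z.2) 0

theorem predictiveKernel_hist (t : Fin T) (x : Fin T → 𝒳) (y : Fin T → 𝒴) :
    predictiveKernel k ρ t (hist t x y) = predictive k ρ t x y :=
  (predictive_factorsThrough_hist t).extend_apply 0 (x, y)

theorem predictive_eq_div
    (k : ∀ t : Fin T, Θ → ((Fin ((t : ℕ) + 1) → 𝒳) × (Fin (t : ℕ) → 𝒴)) → 𝒴 → ℝ)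
    (ρ : Θ → ℝ) (t : Fin T) (x : Fin T → 𝒳) (y : Fin T → 𝒴) (b : 𝒴) :
    predictive k ρ t x y b = (∑ ν, ρ ν * partialLik k t ν x y * k t ν (hist t x y) b) /
      ∑ ν, ρ ν * partialLik k t ν x y := by
  simp only [predictive, post, Finset.sum_div, div_mul_eq_mul_div]

omit [Fintype Θ] in
theorem partialLik_nonneg (hk : ∀ t ν h b, 0 ≤ k t ν h b) (t : Fin T) (ν : Θ) (x : Fin T → 𝒳)
    (y : Fin T → 𝒴) : 0 ≤ partialLik k t ν x y :=
  Finset.prod_nonneg fun s _ => by split_ifs <;> simp [hk]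

theorem isSubPMF_predictive [Fintype 𝒴] (hk : ∀ t ν h, k t ν h ∈ stdSimplex ℝ 𝒴) (hρ : ∀ ν, 0 ≤ ρ ν)
    (t : Fin T) (x : Fin T → 𝒳) (y : Fin T → 𝒴) : IsSubPMF (predictive k ρ t x y) := by
  have weight_nonneg (ν : Θ) : 0 ≤ ρ ν * partialLik k t ν x y :=
    mul_nonneg (hρ ν) (partialLik_nonneg (fun t ν h => (hk t ν h).1) t ν x y)
  refine ⟨fun b => ?_, ?_⟩
  · rw [predictive_eq_div]
    exact div_nonneg
      (Finset.sum_nonneg fun ν _ => mul_nonneg (weight_nonneg ν) ((hk t ν _).1 b))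
      (Finset.sum_nonneg fun ν _ => weight_nonneg ν)
  · simp only [predictive_eq_div, ← Finset.sum_div]
    rw [Finset.sum_comm]
    simp only [← Finset.mul_sum, (hk t _ _).2, mul_one]
    exact div_self_le_one _

theorem isSubPMF_predictiveKernel [Fintype 𝒴] (hk : ∀ t ν h, k t ν h ∈ stdSimplex ℝ 𝒴)
    (hρ : ∀ ν, 0 ≤ ρ ν) (t : Fin T) (h : (Fin ((t : ℕ) + 1) → 𝒳) × (Fin (t : ℕ) → 𝒴)) :
    IsSubPMF (predictiveKernel k ρ t h) := by
  by_cases hreach : ∃ z : (Fin T → 𝒳) × (Fin T → 𝒴), hist t z.1 z.2 = h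
  · obtain ⟨z, rfl⟩ := hreach
    rw [predictiveKernel_hist]
    exact isSubPMF_predictive hk hρ t z.1 z.2
  · rw [predictiveKernel, Function.extend_apply' _ _ _ hreach]
    exact ⟨fun _ => le_rfl, by simp⟩

omit [Fintype Θ] in
theorem partialLik_castSucc
    (k : ∀ t : Fin (T + 1), Θ → ((Fin ((t : ℕ) + 1) → 𝒳) × (Fin (t : ℕ) → 𝒴)) → 𝒴 → ℝ)
    (t : Fin T) (ν : Θ) (x : Fin (T + 1) → 𝒳) (y : Fin (T + 1) → 𝒴) :
    partialLik k t.castSucc ν x y =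
      partialLik (fun s : Fin T => k s.castSucc) t ν (Fin.init x) (Fin.init y) := by
  rw [partialLik, Fin.prod_univ_castSucc, if_neg (by simp), mul_one]
  rfl

omit [Fintype Θ] in
theorem partialLik_last
    (k : ∀ t : Fin (T + 1), Θ → ((Fin ((t : ℕ) + 1) → 𝒳) × (Fin (t : ℕ) → 𝒴)) → 𝒴 → ℝ)
    (ν : Θ) (x : Fin (T + 1) → 𝒳) (y : Fin (T + 1) → 𝒴) :
    partialLik k (Fin.last T) ν x y =
      ∏ s : Fin T, k s.castSucc ν (hist s.castSucc x y) (y s.castSucc) := by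
  simp [partialLik, Fin.prod_univ_castSucc]

theorem predictive_castSucc
    (k : ∀ t : Fin (T + 1), Θ → ((Fin ((t : ℕ) + 1) → 𝒳) × (Fin (t : ℕ) → 𝒴)) → 𝒴 → ℝ)
    (ρ : Θ → ℝ) (t : Fin T) (x : Fin (T + 1) → 𝒳) (y : Fin (T + 1) → 𝒴) :
    predictive k ρ t.castSucc x y =
      predictive (fun s : Fin T => k s.castSucc) ρ t (Fin.init x) (Fin.init y) := by
  funext b
  simp only [predictive, post, partialLik_castSucc]
  rfl

theorem prod_predictive (hk : ∀ t ν h b, 0 ≤ k t ν h b) (hρ : ρ ∈ stdSimplex ℝ Θ)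
    (x : Fin T → 𝒳) (y : Fin T → 𝒴) :
    ∏ t, predictive k ρ t x y (y t) = ∑ ν, ρ ν * ∏ t, k t ν (hist t x y) (y t) := by
  induction T with
  | zero => simp [hρ.2]
  | succ T ih =>
    have hweight (ν : Θ) : 0 ≤ ρ ν * partialLik k (Fin.last T) ν x y :=
      mul_nonneg (hρ.1 ν) (partialLik_nonneg hk _ ν x y)
    calc ∏ t, predictive k ρ t x y (y t)
        = (∏ t : Fin T, predictive (fun s : Fin T => k s.castSucc) ρ t (Fin.init x) (Fin.init y)
            (Fin.init y t)) * predictive k ρ (Fin.last T) x y (y (Fin.last T)) := by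
          simp only [Fin.prod_univ_castSucc, predictive_castSucc, Fin.init]
      _ = (∑ ν, ρ ν * partialLik k (Fin.last T) ν x y) *
            predictive k ρ (Fin.last T) x y (y (Fin.last T)) := by
          simp only [ih (fun t => hk t.castSucc), partialLik_last]
          rfl
      _ = ∑ ν, ρ ν * partialLik k (Fin.last T) ν x y *
            k (Fin.last T) ν (hist (Fin.last T) x y) (y (Fin.last T)) := by
          rw [predictive_eq_div]
          refine mul_div_cancel_of_imp' fun h => Finset.sum_eq_zero fun ν _ => ?_
          rw [(Finset.sum_eq_zero_iff_of_nonneg fun ν _ => hweight ν).mp h ν (Finset.mem_univ ν),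
            zero_mul]
      _ = ∑ ν, ρ ν * ∏ t, k t ν (hist t x y) (y t) := by
          simp only [partialLik_last, Fin.prod_univ_castSucc, mul_assoc]

theorem trajLaw_predictiveKernel
    (q : ∀ t : Fin T, ((Fin (t : ℕ) → 𝒳) × (Fin (t : ℕ) → 𝒴)) → 𝒳 → ℝ)
    (hk : ∀ t ν h b, 0 ≤ k t ν h b) (hρ : ρ ∈ stdSimplex ℝ Θ) :
    trajLaw q (predictiveKernel k ρ) = fun z => ∑ ν, ρ ν * trajLaw q (fun t => k t ν) z := by
  ext ⟨x, y⟩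
  simp only [trajLaw, predictiveKernel_hist, Finset.prod_mul_distrib, prod_predictive hk hρ,
    Finset.mul_sum]
  exact Finset.sum_congr rfl fun ν _ => mul_left_comm _ _ _

end Predictive

section LearnerError

variable {Θ' : Type*} [Fintype Θ']
  {q : ∀ t : Fin T, ((Fin (t : ℕ) → 𝒳) × (Fin (t : ℕ) → 𝒴)) → 𝒳 → ℝ}
  {k : ∀ t : Fin T, Θ → ((Fin ((t : ℕ) + 1) → 𝒳) × (Fin (t : ℕ) → 𝒴)) → 𝒴 → ℝ}
  {k' : ∀ t : Fin T, Θ' → ((Fin ((t : ℕ) + 1) → 𝒳) × (Fin (t : ℕ) → 𝒴)) → 𝒴 → ℝ}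
  {π : Θ → ℝ} {lam : Θ → Θ' → ℝ}

theorem klDivF_trajLaw_predictiveKernel_le
    {κ : ∀ t : Fin T, ((Fin ((t : ℕ) + 1) → 𝒳) × (Fin (t : ℕ) → 𝒴)) → 𝒴 → ℝ}
    {α ρ : Θ' → ℝ} (hq : ∀ t h, q t h ∈ stdSimplex ℝ 𝒳) (hκ : ∀ t h, κ t h ∈ stdSimplex ℝ 𝒴)
    (hk' : ∀ t τ h, k' t τ h ∈ stdSimplex ℝ 𝒴) (hα : α ∈ stdSimplex ℝ Θ')
    (hρ : ρ ∈ stdSimplex ℝ Θ') :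
    klDivF (trajLaw q κ) (trajLaw q (predictiveKernel k' ρ)) ≤ klDivF α ρ +
      ∑ τ, ENNReal.ofReal (α τ) * klDivF (trajLaw q κ) (trajLaw q fun t => k' t τ) := by
  rw [trajLaw_predictiveKernel q (fun t τ h => (hk' t τ h).1) hρ]
  exact klDivF_mixture_le (trajLaw_mem_stdSimplex hq hκ) hα (isSubPMF_of_mem_stdSimplex hρ)
    fun τ => isSubPMF_of_mem_stdSimplex (trajLaw_mem_stdSimplex hq fun t => hk' t τ)

theorem sum_loss_eq_sum_klDivF_trajLaw (hq : ∀ t h, q t h ∈ stdSimplex ℝ 𝒳)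
    (hk : ∀ t ν h, k t ν h ∈ stdSimplex ℝ 𝒴) (hπ : ∀ ν, 0 ≤ π ν) (hlam : ∀ ν τ, 0 ≤ lam ν τ)
    (hk' : ∀ t τ h, IsSubPMF (k' t τ h)) :
    ∑ t : Fin T, ∑ ν, ∑ τ, ∑ x : Fin T → 𝒳, ∑ y : Fin T → 𝒴,
        ENNReal.ofReal (π ν * lam ν τ * lik q k ν x y) *
          klDivF (k t ν (hist t x y)) (k' t τ (hist t x y)) =
      ∑ ν, ENNReal.ofReal (π ν) * ∑ τ, ENNReal.ofReal (lam ν τ) *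
        klDivF (trajLaw q fun t => k t ν) (trajLaw q fun t => k' t τ) := by
  rw [Finset.sum_comm]
  refine Finset.sum_congr rfl fun ν _ => ?_
  rw [Finset.sum_comm, Finset.mul_sum]
  refine Finset.sum_congr rfl fun τ _ => ?_
  rw [klDivF_trajLaw hq (fun t => hk t ν) fun t => hk' t τ]
  simp only [lik_eq_trajLaw, ENNReal.ofReal_mul (mul_nonneg (hπ ν) (hlam ν τ)),
    ENNReal.ofReal_mul (hπ ν), mul_assoc (ENNReal.ofReal _), ← Finset.mul_sum,
    Fintype.sum_prod_type]

theorem statement4_general {πt : Θ' → ℝ} (hq : ∀ t h, q t h ∈ stdSimplex ℝ 𝒳)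
    (hk : ∀ t ν h, k t ν h ∈ stdSimplex ℝ 𝒴) (hk' : ∀ t τ h, k' t τ h ∈ stdSimplex ℝ 𝒴)
    (hπ : π ∈ stdSimplex ℝ Θ) (hlam : ∀ ν, lam ν ∈ stdSimplex ℝ Θ')
    (hmarg : ∀ τ, ∑ ν, π ν * lam ν τ = πt τ) :
    ∑ t : Fin T, ∑ ν, ∑ τ, ∑ x : Fin T → 𝒳, ∑ y : Fin T → 𝒴,
        ENNReal.ofReal (π ν * lam ν τ * lik q k ν x y) *
          klDivF (k t ν (hist t x y)) (predictive k' πt t x y) ≤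
      ENNReal.ofReal (mutualInfo
          (fun ω : Θ × Θ' × (Fin T → 𝒳) × (Fin T → 𝒴) =>
            π ω.1 * lam ω.1 ω.2.1 * lik q k ω.1 ω.2.2.1 ω.2.2.2)
          (fun ω => ω.1) (fun ω => ω.2.1)) +
        ∑ t : Fin T, ∑ ν, ∑ τ, ∑ x : Fin T → 𝒳, ∑ y : Fin T → 𝒴,
          ENNReal.ofReal (π ν * lam ν τ * lik q k ν x y) *
            klDivF (k t ν (hist t x y)) (k' t τ (hist t x y)) := by
  obtain rfl : (fun τ => ∑ ν, π ν * lam ν τ) = πt := funext hmarg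
  set πt := fun τ => ∑ ν, π ν * lam ν τ
  have hπt : πt ∈ stdSimplex ℝ Θ' := mixture_mem_stdSimplex hπ hlam
  have hlik (ν : Θ) : ∑ x, ∑ y, lik q k ν x y = 1 := by
    simp only [lik_eq_trajLaw, ← Fintype.sum_prod_type',
      (trajLaw_mem_stdSimplex hq fun t => hk t ν).2]
  have hmass (ω : Θ × Θ' × (Fin T → 𝒳) × (Fin T → 𝒴)) :
      0 ≤ π ω.1 * lam ω.1 ω.2.1 * lik q k ω.1 ω.2.2.1 ω.2.2.2 :=
    mul_nonneg (mul_nonneg (hπ.1 _) ((hlam _).1 _))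
      ((trajLaw_mem_stdSimplex hq fun t => hk t ω.1).1 ω.2.2)
  have hlearner := sum_loss_eq_sum_klDivF_trajLaw (k' := fun t (_ : Θ') => predictiveKernel k' πt t)
    hq hk hπ.1 (fun ν => (hlam ν).1) fun t _ => isSubPMF_predictiveKernel hk' hπt.1 t
  simp only [predictiveKernel_hist, ← Finset.sum_mul, sum_ofReal_eq_one (hlam _), one_mul]
    at hlearner
  rw [hlearner, sum_loss_eq_sum_klDivF_trajLaw hq hk hπ.1 (fun ν => (hlam ν).1)
      fun t τ h => isSubPMF_of_mem_stdSimplex (hk' t τ h),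
    ofReal_mutualInfo_of_pr_eq_jointMass hmass hπ hlam (pr_pair_eq_jointMass hlik),
    ← Finset.sum_add_distrib]
  refine Finset.sum_le_sum fun ν _ => ?_
  rw [← mul_add]
  gcongr
  exact klDivF_trajLaw_predictiveKernel_le hq (fun t => hk t ν) hk' (hlam ν) hπt

end LearnerError

/-- misspecified learner error bound. -/
theorem statement4 (hT : 1 ≤ T)
    (q : ∀ t : Fin T, ((Fin (t : ℕ) → 𝒳) × (Fin (t : ℕ) → 𝒴)) → 𝒳 → ℝ)
    (k : ∀ t : Fin T, Θ → ((Fin ((t : ℕ) + 1) → 𝒳) × (Fin (t : ℕ) → 𝒴)) → 𝒴 → ℝ)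
    (hq : ∀ t h, (∀ a, 0 ≤ q t h a) ∧ ∑ a, q t h a = 1)
    (hk : ∀ t ν h, (∀ b, 0 ≤ k t ν h b) ∧ ∑ b, k t ν h b = 1)
    (π πt : Θ → ℝ)
    (hπ : (∀ ν, 0 ≤ π ν) ∧ ∑ ν, π ν = 1)
    (hπt : (∀ ν, 0 ≤ πt ν) ∧ ∑ ν, πt ν = 1)
    (lam : Θ → Θ → ℝ)
    (hlam : ∀ ν, (∀ τ, 0 ≤ lam ν τ) ∧ ∑ τ, lam ν τ = 1)
    (hmarg : ∀ τ, ∑ ν, π ν * lam ν τ = πt τ) :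
    (T : ℝ≥0∞)⁻¹ * ∑ t : Fin T, ∑ ν : Θ, ∑ τ : Θ, ∑ x : Fin T → 𝒳, ∑ y : Fin T → 𝒴,
        ENNReal.ofReal (π ν * lam ν τ * lik q k ν x y) *
          klDivF (k t ν (hist t x y)) (predictive k πt t x y)
      ≤ ENNReal.ofReal (mutualInfo
            (fun ω : Θ × Θ × (Fin T → 𝒳) × (Fin T → 𝒴) =>
              π ω.1 * lam ω.1 ω.2.1 * lik q k ω.1 ω.2.2.1 ω.2.2.2)
            (fun ω => ω.1) (fun ω => ω.2.1)) / (T : ℝ≥0∞)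
        + (T : ℝ≥0∞)⁻¹ * ∑ t : Fin T, ∑ ν : Θ, ∑ τ : Θ, ∑ x : Fin T → 𝒳, ∑ y : Fin T → 𝒴,
            ENNReal.ofReal (π ν * lam ν τ * lik q k ν x y) *
              klDivF (k t ν (hist t x y)) (k t τ (hist t x y)) := by

  rw [ENNReal.div_eq_inv_mul, ← mul_add]
  gcongr
  exact statement4_general hq hk hk hπ hlam hmarg

end
end

section
/- Let r, K, p be positive integers, A ∈ ℝ^{r×r}, V ∈ ℝ^{p×r}, and let U, Ũ ∈ ℝ^{r×K} be matrices each of whose columns has ℓ2 norm at most 1. Define F(U) = Clip( V · U · Softmax( UᵀAU / √r ) ) ∈ ℝ^{p×K}, and similarly F(Ũ). Then ‖F(U) − F(Ũ)‖_F² ≤ 2K · ‖V‖_σ² · ( 1 + 4K·‖A‖_σ² / r ) · ‖U − Ũ‖_F², i.e., a single softmax self-attention transformer layer is Lipschitz in its input with squared Lipschitz constant 2K‖V‖_σ²(1 + 4K‖A‖_σ²/r). -/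
/-!
Statement 17 (transformer layer Lipschitz bound): a single softmax self-attention layer
`F(U) = Clip(V · U · Softmax(UᵀAU/√r))` acting on matrices `U ∈ ℝ^{r×K}` whose columns have
ℓ2 norm at most 1 satisfies
`‖F(U) − F(Ũ)‖_F² ≤ 2K‖V‖_σ²(1 + 4K‖A‖_σ²/r)·‖U − Ũ‖_F²`.
-/

noncomputable section

/-- Squared Frobenius norm of a real matrix. -/
def frobSq {m n : Type*} [Fintype m] [Fintype n] (M : Matrix m n ℝ) : ℝ :=
  ∑ i, ∑ j, (M i j) ^ 2

/-- ℓ2 operator norm of a real matrix. -/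
def opNorm {m n : ℕ} (M : Matrix (Fin m) (Fin n) ℝ) : ℝ :=
  ‖LinearMap.toContinuousLinearMap (Matrix.toEuclideanLin M)‖

/-- Columnwise softmax of a square matrix. -/
def softmaxCols {K : ℕ} (M : Matrix (Fin K) (Fin K) ℝ) : Matrix (Fin K) (Fin K) ℝ :=
  Matrix.of fun i j => Real.exp (M i j) / ∑ l, Real.exp (M l j)

/-- Columnwise clipping: rescale each column to have ℓ2 norm at most 1. -/
def clipCols {m n : Type*} [Fintype m] (W : Matrix m n ℝ) : Matrix m n ℝ :=
  Matrix.of fun i j => W i j / max 1 (Real.sqrt (∑ i', (W i' j) ^ 2))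

/-- A single softmax self-attention transformer layer. -/
def layer {r K p : ℕ} (A : Matrix (Fin r) (Fin r) ℝ) (V : Matrix (Fin p) (Fin r) ℝ)
    (U : Matrix (Fin r) (Fin K) ℝ) : Matrix (Fin p) (Fin K) ℝ :=
  clipCols (V * U * softmaxCols ((Real.sqrt r)⁻¹ • (U.transpose * A * U)))

/-!
Clipping and softmax are both firmly nonexpansive for the Euclidean inner product. For clipping this
is the variational inequality of a metric projection. For softmax, `log (softmax x)` is `x` minus a
constant vector, a softmax difference is orthogonal to constants, and on `(0, 1]` differences of
logarithms dominate differences, whence `‖p - q‖² ≤ ⟪p - q, log p - log q⟫ = ⟪p - q, x - y⟫`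
for `p = softmax x` and `q = softmax y`.

What remains is the product rule `M N - M' N' = (M - M') N + M' (N - N')`, applied once to the
scores `Uᵀ (A U)` and once to the values `U · Softmax(…)`. Submultiplicativity of the Frobenius norm
turns a bound on `‖U‖_F²` into a Lipschitz constant, and unit columns give `‖U‖_F² ≤ K`.
-/

section Clip

variable {E : Type*} [SeminormedAddCommGroup E] [NormedSpace ℝ E]

/-- Radial clipping to the closed unit ball, which is the metric projection onto it in an
inner product space. -/
def clipToUnitBall (x : E) : E := (max 1 ‖x‖)⁻¹ • x

lemma norm_clipToUnitBall_le_one (x : E) : ‖clipToUnitBall x‖ ≤ 1 := by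
  have hmax : 0 < max 1 ‖x‖ := by positivity
  rw [clipToUnitBall, norm_smul, norm_inv, Real.norm_of_nonneg hmax.le, inv_mul_le_one₀ hmax]
  exact le_max_right _ _

end Clip

section FirmlyNonexpansive

open scoped RealInnerProductSpace

variable {E : Type*} [SeminormedAddCommGroup E] [InnerProductSpace ℝ E]

/-- Firm nonexpansiveness (1-cocoercivity) of a self-map of a real inner product space. -/
def FirmlyNonexpansive (f : E → E) : Prop :=
  ∀ x y, ‖f x - f y‖ ^ 2 ≤ ⟪f x - f y, x - y⟫

lemma FirmlyNonexpansive.norm_sub_le {f : E → E} (hf : FirmlyNonexpansive f) (x y : E) :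
    ‖f x - f y‖ ≤ ‖x - y‖ := by
  have h : ‖f x - f y‖ ^ 2 ≤ ‖f x - f y‖ * ‖x - y‖ := (hf x y).trans (real_inner_le_norm _ _)
  nlinarith [norm_nonneg (f x - f y), norm_nonneg (x - y)]

lemma firmlyNonexpansive_of_inner_sub_nonpos {f : E → E}
    (hf : ∀ x y, ⟪x - f x, f y - f x⟫ ≤ 0) : FirmlyNonexpansive f := by
  intro x y
  have hxy : ⟪f x - f y, x - y⟫ - ‖f x - f y‖ ^ 2
      = -⟪x - f x, f y - f x⟫ - ⟪y - f y, f x - f y⟫ := by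
    simp only [← real_inner_self_eq_norm_sq, inner_sub_left, inner_sub_right,
      real_inner_comm x, real_inner_comm y, real_inner_comm (f y) (f x)]
    ring
  linarith [hf x y, hf y x]

lemma inner_sub_clipToUnitBall_nonpos (x : E) {z : E} (hz : ‖z‖ ≤ 1) :
    ⟪x - clipToUnitBall x, z - clipToUnitBall x⟫ ≤ 0 := by
  rcases le_total ‖x‖ 1 with hx | hx
  · simp [clipToUnitBall, hx]
  · have hx0 : ‖x‖ ≠ 0 := by positivity
    have hsub : x - clipToUnitBall x = (‖x‖ - 1) • clipToUnitBall x := by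
      rw [clipToUnitBall, max_eq_right hx, sub_smul, one_smul, smul_inv_smul₀ hx0]
    have hnorm : ‖clipToUnitBall x‖ = 1 := by
      rw [clipToUnitBall, max_eq_right hx, norm_smul, norm_inv, norm_norm, inv_mul_cancel₀ hx0]
    have hinner : ⟪clipToUnitBall x, z⟫ ≤ 1 := by
      simpa only [hnorm, one_mul] using (real_inner_le_norm (clipToUnitBall x) z).trans
        (mul_le_mul_of_nonneg_left hz (norm_nonneg _))
    rw [hsub, real_inner_smul_left, inner_sub_right, real_inner_self_eq_norm_sq, hnorm]
    exact mul_nonpos_of_nonneg_of_nonpos (by linarith) (by linarith)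

lemma firmlyNonexpansive_clipToUnitBall : FirmlyNonexpansive (clipToUnitBall : E → E) :=
  firmlyNonexpansive_of_inner_sub_nonpos fun x y =>
    inner_sub_clipToUnitBall_nonpos x (norm_clipToUnitBall_le_one y)

end FirmlyNonexpansive

section Softmax

lemma sq_sub_le_sub_mul_log_sub_log {a b : ℝ} (ha : 0 < a) (hb : 0 < b) (ha1 : a ≤ 1)
    (hb1 : b ≤ 1) : (a - b) ^ 2 ≤ (a - b) * (Real.log a - Real.log b) := by
  wlog hab : b ≤ a generalizing a b
  · linarith [this hb ha hb1 ha1 (le_of_not_ge hab)]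
  have hlog : a - b ≤ Real.log a - Real.log b := calc
    a - b ≤ (a - b) / a := le_div_self (sub_nonneg.2 hab) ha ha1
    _ = 1 - (a / b)⁻¹ := by field_simp
    _ ≤ Real.log (a / b) := Real.one_sub_inv_le_log_of_pos (div_pos ha hb)
    _ = Real.log a - Real.log b := Real.log_div ha.ne' hb.ne'
  rw [sq]
  exact mul_le_mul_of_nonneg_left hlog (sub_nonneg.2 hab)

open scoped RealInnerProductSpace

variable {ι : Type*} [Fintype ι]

/-- The softmax of a vector, as a self-map of Euclidean space. -/
def softmax (x : EuclideanSpace ℝ ι) : EuclideanSpace ℝ ι :=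
  WithLp.toLp 2 fun i => Real.exp (x i) / ∑ l, Real.exp (x l)

lemma sum_exp_pos [Nonempty ι] (x : ι → ℝ) : 0 < ∑ l, Real.exp (x l) :=
  Finset.sum_pos (fun _ _ => Real.exp_pos _) Finset.univ_nonempty

variable [Nonempty ι] (x : EuclideanSpace ℝ ι)

lemma softmax_pos (i : ι) : 0 < softmax x i :=
  div_pos (Real.exp_pos _) (sum_exp_pos x)

lemma sum_softmax : ∑ i, softmax x i = 1 := by
  simp only [softmax]
  rw [← Finset.sum_div, div_self (sum_exp_pos x).ne']

lemma softmax_le_one (i : ι) : softmax x i ≤ 1 :=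
  sum_softmax x ▸ Finset.single_le_sum (fun l _ => (softmax_pos x l).le) (Finset.mem_univ i)

lemma log_softmax (i : ι) : Real.log (softmax x i) = x i - Real.log (∑ l, Real.exp (x l)) := by
  simp only [softmax]
  rw [Real.log_div (Real.exp_pos _).ne' (sum_exp_pos x).ne', Real.log_exp]

lemma norm_softmax_le_one : ‖softmax x‖ ≤ 1 := by
  rw [← sq_le_one_iff₀ (norm_nonneg _), EuclideanSpace.real_norm_sq_eq, ← sum_softmax x]
  exact Finset.sum_le_sum fun i _ =>
    pow_le_of_le_one (softmax_pos x i).le (softmax_le_one x i) two_ne_zero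

lemma firmlyNonexpansive_softmax :
    FirmlyNonexpansive (softmax : EuclideanSpace ℝ ι → EuclideanSpace ℝ ι) := by
  intro x y
  set c := Real.log (∑ l, Real.exp (x l)) - Real.log (∑ l, Real.exp (y l))
  have hconst : ∑ i, (softmax x i - softmax y i) * c = 0 := by
    rw [← Finset.sum_mul, Finset.sum_sub_distrib, sum_softmax, sum_softmax, sub_self, zero_mul]
  calc ‖softmax x - softmax y‖ ^ 2
      = ∑ i, (softmax x i - softmax y i) ^ 2 := EuclideanSpace.real_norm_sq_eq _
    _ ≤ ∑ i, (softmax x i - softmax y i) * (Real.log (softmax x i) - Real.log (softmax y i)) :=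
        Finset.sum_le_sum fun i _ => sq_sub_le_sub_mul_log_sub_log (softmax_pos x i)
          (softmax_pos y i) (softmax_le_one x i) (softmax_le_one y i)
    _ = ∑ i, ((softmax x i - softmax y i) * (x i - y i) - (softmax x i - softmax y i) * c) :=
        Finset.sum_congr rfl fun i _ => by rw [log_softmax, log_softmax]; ring
    _ = ∑ i, (softmax x i - softmax y i) * (x i - y i) := by
        rw [Finset.sum_sub_distrib, hconst, sub_zero]
    _ = ⟪softmax x - softmax y, x - y⟫ := by
        simp [PiLp.inner_apply, mul_comm]

end Softmax

section Frobenius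

open scoped Matrix Matrix.Norms.Frobenius

variable {l m n : Type*} [Fintype l] [Fintype m] [Fintype n]

lemma frobSq_eq_norm_sq (M : Matrix m n ℝ) : frobSq M = ‖M‖ ^ 2 := by
  rw [Matrix.frobenius_norm_def, ← Real.sqrt_eq_rpow, Real.sq_sqrt (by positivity)]
  simp [frobSq]

lemma frobSq_nonneg (M : Matrix m n ℝ) : 0 ≤ frobSq M :=
  frobSq_eq_norm_sq M ▸ sq_nonneg _

lemma frobSq_transpose (M : Matrix m n ℝ) : frobSq Mᵀ = frobSq M :=
  Finset.sum_comm

lemma frobSq_smul (c : ℝ) (M : Matrix m n ℝ) : frobSq (c • M) = c ^ 2 * frobSq M := by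
  simp only [frobSq, Matrix.smul_apply, smul_eq_mul, mul_pow, Finset.mul_sum]

lemma frobSq_add_le (M N : Matrix m n ℝ) : frobSq (M + N) ≤ 2 * (frobSq M + frobSq N) := by
  simp only [frobSq_eq_norm_sq]
  exact (pow_le_pow_left₀ (norm_nonneg _) (norm_add_le M N) 2).trans add_sq_le

lemma frobSq_mul_le (M : Matrix l m ℝ) (N : Matrix m n ℝ) :
    frobSq (M * N) ≤ frobSq M * frobSq N := by
  simp only [frobSq_eq_norm_sq, ← mul_pow]
  exact pow_le_pow_left₀ (norm_nonneg _) (Matrix.frobenius_norm_mul M N) 2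

lemma frobSq_mul_sub_mul_le (M M' : Matrix l m ℝ) (N N' : Matrix m n ℝ) :
    frobSq (M * N - M' * N')
      ≤ 2 * (frobSq (M - M') * frobSq N + frobSq M' * frobSq (N - N')) := by
  have hsplit : M * N - M' * N' = (M - M') * N + M' * (N - N') := by
    rw [Matrix.sub_mul, Matrix.mul_sub, sub_add_sub_cancel]
  rw [hsplit]
  refine (frobSq_add_le _ _).trans ?_
  gcongr <;> exact frobSq_mul_le _ _

lemma frobSq_eq_sum_norm_col_sq (M : Matrix m n ℝ) :
    frobSq M = ∑ j, ‖WithLp.toLp 2 (M.col j)‖ ^ 2 := by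
  simp only [EuclideanSpace.real_norm_sq_eq, Matrix.col_apply]
  exact Finset.sum_comm

lemma frobSq_sub_le_of_norm_col_sub_le {M M' : Matrix l n ℝ} {N N' : Matrix m n ℝ}
    (h : ∀ j, ‖WithLp.toLp 2 (M.col j) - WithLp.toLp 2 (M'.col j)‖
      ≤ ‖WithLp.toLp 2 (N.col j) - WithLp.toLp 2 (N'.col j)‖) :
    frobSq (M - M') ≤ frobSq (N - N') := by
  simp only [frobSq_eq_sum_norm_col_sq]
  gcongr with j
  exact h j

lemma frobSq_le_card_of_norm_col_le_one {M : Matrix m n ℝ}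
    (h : ∀ j, ‖WithLp.toLp 2 (M.col j)‖ ≤ 1) : frobSq M ≤ Fintype.card n := by
  rw [frobSq_eq_sum_norm_col_sq, ← nsmul_one, Fintype.card]
  exact Finset.sum_le_card_nsmul _ _ _ fun j _ => pow_le_one₀ (norm_nonneg _) (h j)

lemma frobSq_le_card_of_sqrt_col_le_one {M : Matrix m n ℝ}
    (h : ∀ j, Real.sqrt (∑ i, (M i j) ^ 2) ≤ 1) : frobSq M ≤ Fintype.card n :=
  frobSq_le_card_of_norm_col_le_one fun j => by simpa [EuclideanSpace.norm_eq] using h j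

lemma norm_toLp_mulVec_le {r p : ℕ} (V : Matrix (Fin p) (Fin r) ℝ) (x : Fin r → ℝ) :
    ‖WithLp.toLp 2 (V *ᵥ x)‖ ≤ opNorm V * ‖WithLp.toLp 2 x‖ :=
  (LinearMap.toContinuousLinearMap (Matrix.toEuclideanLin V)).le_opNorm (WithLp.toLp 2 x)

lemma frobSq_mul_le_opNorm_sq_mul {r p : ℕ} (V : Matrix (Fin p) (Fin r) ℝ)
    (W : Matrix (Fin r) n ℝ) : frobSq (V * W) ≤ opNorm V ^ 2 * frobSq W := by
  simp only [frobSq_eq_sum_norm_col_sq, Finset.mul_sum, ← mul_pow]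
  gcongr with j
  exact norm_toLp_mulVec_le V (W.col j)

end Frobenius

section Layer

open scoped Matrix

lemma toLp_col_clipCols {m n : Type*} [Fintype m] (W : Matrix m n ℝ) (j : n) :
    WithLp.toLp 2 ((clipCols W).col j) = clipToUnitBall (WithLp.toLp 2 (W.col j)) := by
  ext i
  simp [clipCols, clipToUnitBall, EuclideanSpace.norm_eq, div_eq_inv_mul]

lemma frobSq_clipCols_sub_le {m n : Type*} [Fintype m] [Fintype n] (W W' : Matrix m n ℝ) :
    frobSq (clipCols W - clipCols W') ≤ frobSq (W - W') := by
  refine frobSq_sub_le_of_norm_col_sub_le fun j => ?_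
  rw [toLp_col_clipCols, toLp_col_clipCols]
  exact firmlyNonexpansive_clipToUnitBall.norm_sub_le _ _

variable {r K : ℕ}

lemma toLp_col_softmaxCols (M : Matrix (Fin K) (Fin K) ℝ) (j : Fin K) :
    WithLp.toLp 2 ((softmaxCols M).col j) = softmax (WithLp.toLp 2 (M.col j)) :=
  rfl

lemma frobSq_softmaxCols_sub_le (M M' : Matrix (Fin K) (Fin K) ℝ) :
    frobSq (softmaxCols M - softmaxCols M') ≤ frobSq (M - M') := by
  refine frobSq_sub_le_of_norm_col_sub_le fun j => ?_
  have : Nonempty (Fin K) := ⟨j⟩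
  rw [toLp_col_softmaxCols, toLp_col_softmaxCols]
  exact firmlyNonexpansive_softmax.norm_sub_le _ _

lemma frobSq_softmaxCols_le (M : Matrix (Fin K) (Fin K) ℝ) : frobSq (softmaxCols M) ≤ K := by
  have hcol (j : Fin K) : ‖WithLp.toLp 2 ((softmaxCols M).col j)‖ ≤ 1 := by
    have : Nonempty (Fin K) := ⟨j⟩
    rw [toLp_col_softmaxCols]
    exact norm_softmax_le_one _
  simpa using frobSq_le_card_of_norm_col_le_one hcol

/-- The scaled attention scores `UᵀAU / √r` to which `layer` applies softmax. -/
def attentionScores (A : Matrix (Fin r) (Fin r) ℝ) (U : Matrix (Fin r) (Fin K) ℝ) :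
    Matrix (Fin K) (Fin K) ℝ :=
  (Real.sqrt r)⁻¹ • (Uᵀ * A * U)

lemma frobSq_attentionScores_sub_le {B : ℝ} (A : Matrix (Fin r) (Fin r) ℝ)
    {U U' : Matrix (Fin r) (Fin K) ℝ} (hU : frobSq U ≤ B) (hU' : frobSq U' ≤ B) :
    frobSq (attentionScores A U - attentionScores A U')
      ≤ 4 * B * opNorm A ^ 2 / r * frobSq (U - U') := by
  have hdiff : 0 ≤ frobSq (U - U') := frobSq_nonneg _
  have hAU : frobSq (A * U) ≤ opNorm A ^ 2 * B :=
    (frobSq_mul_le_opNorm_sq_mul A U).trans (by gcongr)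
  have hAD : frobSq (A * U - A * U') ≤ opNorm A ^ 2 * frobSq (U - U') :=
    Matrix.mul_sub A U U' ▸ frobSq_mul_le_opNorm_sq_mul A (U - U')
  have hB : 0 ≤ B := (frobSq_nonneg U).trans hU
  have hscale : ((Real.sqrt r)⁻¹) ^ 2 = (r : ℝ)⁻¹ := by
    rw [inv_pow, Real.sq_sqrt r.cast_nonneg]
  calc frobSq (attentionScores A U - attentionScores A U')
      = (r : ℝ)⁻¹ * frobSq (Uᵀ * (A * U) - U'ᵀ * (A * U')) := by
        rw [attentionScores, attentionScores, ← smul_sub, frobSq_smul, hscale, Matrix.mul_assoc,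
          Matrix.mul_assoc]
    _ ≤ (r : ℝ)⁻¹ * (2 * (frobSq (Uᵀ - U'ᵀ) * frobSq (A * U)
          + frobSq U'ᵀ * frobSq (A * U - A * U'))) := by
        gcongr
        exact frobSq_mul_sub_mul_le _ _ _ _
    _ ≤ (r : ℝ)⁻¹ * (2 * (frobSq (U - U') * (opNorm A ^ 2 * B)
          + B * (opNorm A ^ 2 * frobSq (U - U')))) := by
        rw [← Matrix.transpose_sub, frobSq_transpose, frobSq_transpose]
        gcongr
        exact frobSq_nonneg _
    _ = 4 * B * opNorm A ^ 2 / r * frobSq (U - U') := by ring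

end Layer

theorem statement17_general {r K p : ℕ} {B : ℝ}
    (A : Matrix (Fin r) (Fin r) ℝ) (V : Matrix (Fin p) (Fin r) ℝ)
    {U U' : Matrix (Fin r) (Fin K) ℝ} (hU : frobSq U ≤ B) (hU' : frobSq U' ≤ B) :
    frobSq (layer A V U - layer A V U')
      ≤ 2 * opNorm V ^ 2 * (K + 4 * B ^ 2 * opNorm A ^ 2 / r) * frobSq (U - U') := by
  set S := softmaxCols (attentionScores A U)
  set S' := softmaxCols (attentionScores A U')
  have hdiff : 0 ≤ frobSq (U - U') := frobSq_nonneg _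
  have hB : 0 ≤ B := (frobSq_nonneg U).trans hU
  have hSS' : frobSq (S - S') ≤ 4 * B * opNorm A ^ 2 / r * frobSq (U - U') :=
    (frobSq_softmaxCols_sub_le _ _).trans (frobSq_attentionScores_sub_le A hU hU')
  calc frobSq (layer A V U - layer A V U')
      ≤ frobSq (V * U * S - V * U' * S') := frobSq_clipCols_sub_le _ _
    _ = frobSq (V * (U * S - U' * S')) := by
        rw [Matrix.mul_sub, Matrix.mul_assoc, Matrix.mul_assoc]
    _ ≤ opNorm V ^ 2 * frobSq (U * S - U' * S') := frobSq_mul_le_opNorm_sq_mul _ _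
    _ ≤ opNorm V ^ 2 * (2 * (frobSq (U - U') * frobSq S + frobSq U' * frobSq (S - S'))) := by
        gcongr
        exact frobSq_mul_sub_mul_le _ _ _ _
    _ ≤ opNorm V ^ 2 * (2 * (frobSq (U - U') * K
          + B * (4 * B * opNorm A ^ 2 / r * frobSq (U - U')))) := by
        gcongr
        · exact frobSq_softmaxCols_le _
        · exact frobSq_nonneg _
    _ = 2 * opNorm V ^ 2 * (K + 4 * B ^ 2 * opNorm A ^ 2 / r) * frobSq (U - U') := by ring

/-- transformer layer Lipschitz bound. -/
theorem statement17 (r K p : ℕ) (hr : 0 < r) (hK : 0 < K) (hp : 0 < p)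
    (A : Matrix (Fin r) (Fin r) ℝ) (V : Matrix (Fin p) (Fin r) ℝ)
    (U U' : Matrix (Fin r) (Fin K) ℝ)
    (hU : ∀ j, Real.sqrt (∑ i, (U i j) ^ 2) ≤ 1)
    (hU' : ∀ j, Real.sqrt (∑ i, (U' i j) ^ 2) ≤ 1) :
    frobSq (layer A V U - layer A V U')
      ≤ 2 * K * opNorm V ^ 2 * (1 + 4 * K * opNorm A ^ 2 / r) * frobSq (U - U') := by
  have hFU : frobSq U ≤ K := by simpa using frobSq_le_card_of_sqrt_col_le_one hU
  have hFU' : frobSq U' ≤ K := by simpa using frobSq_le_card_of_sqrt_col_le_one hU'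
  exact (statement17_general A V hFU hFU').trans_eq (by ring)

end
end
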